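/- Let G be a connected graph and H : V(G) → 2^ℕ a function such that for every vertex v and every natural number i, if i ∉ H(v) then i+1 ∈ H(v) (i.e., (G,H) is dense). Then for any fixed vertex u ∈ V(G), there exists an orientation O of G such that d⁺_O(v) ∈ H(v) for every vertex v ≠ u. -/

import Mathlib

/-- An orientation of a graph: each edge is assigned a source endpoint. -/
structure GOrientation {V : Type*} (G : SimpleGraph V) where
  src : Sym2 V → V
  mem : ∀ e ∈ G.edgeSet, src e ∈ e

/-- Out-degree of `v` under orientation `O`: number of edges whose source is `v`. -/
noncomputable def outDeg {V : Type*} {G : SimpleGraph V} (O : GOrientation G) (v : V) : ℕ :=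
  Set.ncard {e ∈ G.edgeSet | O.src e = v}

/-- Degree of a vertex. -/
noncomputable def deg {V : Type*} (G : SimpleGraph V) (v : V) : ℕ :=
  (G.neighborSet v).ncard

/-- The pair `(G, H)` is dense: `G` is connected and `i ∉ H v → i+1 ∈ H v`. -/
def DensePair {V : Type*} (G : SimpleGraph V) (H : V → Set ℕ) : Prop :=
  G.Connected ∧ ∀ v : V, ∀ i : ℕ, i ∉ H v → i + 1 ∈ H v

/-- `D⁺_{G,H}(u)`: possible out-degrees of `u` over orientations feasible away from `u`. -/
noncomputable def Dset {V : Type*} (G : SimpleGraph V) (H : V → Set ℕ) (u : V) : Set ℕ :=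
  {d | ∃ O : GOrientation G, (∀ x, x ≠ u → outDeg O x ∈ H x) ∧ outDeg O u = d}

/-- `x` is a cut vertex: `G` is connected but `G - x` is not. -/
def IsCutVertex {V : Type*} (G : SimpleGraph V) (x : V) : Prop :=
  G.Connected ∧ ¬ (G.induce ({x}ᶜ : Set V)).Connected

open Classical in
lemma flip_exists {V : Type*} [Fintype V] (G : SimpleGraph V) (H : V → Set ℕ)
    (hH : ∀ v : V, ∀ i : ℕ, i ∉ H v → i + 1 ∈ H v) (O : GOrientation G) (v w : V)
    (hvw : G.Adj v w) (hb : outDeg O v ∉ H v) :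
    ∃ O' : GOrientation G, outDeg O' v ∈ H v ∧
      ∀ x, x ≠ v → x ≠ w → outDeg O' x = outDeg O x := by
  have hne : v ≠ w := hvw.ne
  have he : s(v, w) ∈ G.edgeSet := hvw
  have hm : O.src s(v, w) = v ∨ O.src s(v, w) = w := by simpa using O.mem _ he
  have key : ∀ y : V, y ∈ s(v, w) → ∃ O' : GOrientation G,
      O'.src = Function.update O.src s(v, w) y := fun y hy =>
    ⟨⟨Function.update O.src s(v, w) y, fun e h => by
      by_cases h1 : e = s(v, w)
      · subst h1; simpa using hy
      · simpa [Function.update_of_ne h1] using O.mem e h⟩, rfl⟩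
  have other : ∀ (O' : GOrientation G) (y : V), y ∈ s(v, w) →
      O'.src = Function.update O.src s(v, w) y →
      ∀ x, x ≠ v → x ≠ w → outDeg O' x = outDeg O x := by
    intro O' y hy hO x hxv hxw
    unfold outDeg
    congr 1
    ext e
    by_cases h1 : e = s(v, w)
    · subst h1
      have hy' : y = v ∨ y = w := by simpa using hy
      simp only [hO, Function.update_self, Set.mem_setOf_eq]
      grind
    · simp [hO, Function.update_of_ne h1]
  rcases hm with hs | hs
  · obtain ⟨O', hO⟩ := key w (by simp)
    refine ⟨O', ?_, other O' w (by simp) hO⟩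
    have hset : {e ∈ G.edgeSet | O.src e = v} =
        insert s(v, w) {e ∈ G.edgeSet | O'.src e = v} := by
      ext e
      by_cases h1 : e = s(v, w)
      · subst h1; simp [hs, hvw]
      · simp [hO, Function.update_of_ne h1, h1]
    have hc : outDeg O v = outDeg O' v + 1 := by
      unfold outDeg
      rw [hset, Set.ncard_insert_of_notMem _ (Set.toFinite _)]
      simp [hO, hne.symm]
    by_contra h
    exact hb (hc ▸ hH v _ h)
  · obtain ⟨O', hO⟩ := key v (by simp)
    refine ⟨O', ?_, other O' v (by simp) hO⟩
    have hset : {e ∈ G.edgeSet | O'.src e = v} =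
        insert s(v, w) {e ∈ G.edgeSet | O.src e = v} := by
      ext e
      by_cases h1 : e = s(v, w)
      · subst h1; simp [hO, hvw]
      · simp [hO, Function.update_of_ne h1, h1]
    have hc : outDeg O' v = outDeg O v + 1 := by
      unfold outDeg
      rw [hset, Set.ncard_insert_of_notMem _ (Set.toFinite _)]
      simp [hs, hne.symm]
    rw [hc]
    exact hH v _ hb

open Classical in
lemma stmt1_aux {V : Type*} [Fintype V] (G : SimpleGraph V) (H : V → Set ℕ)
    (hd : DensePair G H) (u : V) (n : ℕ) : ∀ O : GOrientation G,
    (∑ x, if outDeg O x ∈ H x then 0 else G.dist x u) = n →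
    ∃ O : GOrientation G, ∀ v, v ≠ u → outDeg O v ∈ H v := by
  induction n using Nat.strong_induction_on with
  | _ n ih =>
  intro O hn
  by_cases hall : ∀ v, v ≠ u → outDeg O v ∈ H v
  · exact ⟨O, hall⟩
  push Not at hall
  obtain ⟨v, hvu, hb⟩ := hall
  obtain ⟨p, hp⟩ := hd.1.exists_walk_length_eq_dist v u
  cases p with
  | nil => exact absurd rfl hvu
  | @cons _ w _ h q =>
  have hw : G.dist w u + 1 ≤ G.dist v u := by
    have := SimpleGraph.dist_le q
    simp at hp
    omega
  obtain ⟨O', hv', ho⟩ := flip_exists G H hd.2 O v w h hb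
  refine ih _ ?_ O' rfl
  have hle : ∑ x, ((if outDeg O' x ∈ H x then 0 else G.dist x u) +
      if x = v then G.dist v u else 0) ≤
      ∑ x, ((if outDeg O x ∈ H x then 0 else G.dist x u) +
      if x = w then G.dist w u else 0) := by
    apply Finset.sum_le_sum
    intro x _
    have hne := h.ne
    by_cases hxv : x = v
    · subst hxv; simp [hv', hb]
    · by_cases hxw : x = w
      · subst hxw; simp only [hxv, if_true, if_false]; split_ifs <;> omega
      · simp [hxv, hxw, ho x hxv hxw]
  simp only [Finset.sum_add_distrib, Finset.sum_ite_eq', Finset.mem_univ, if_true] at hle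
  omega

theorem stmt1 {V : Type*} [Fintype V] (G : SimpleGraph V) (H : V → Set ℕ)
    (hd : DensePair G H) (u : V) :
    ∃ O : GOrientation G, ∀ v, v ≠ u → outDeg O v ∈ H v := by
  exact stmt1_aux G H hd u _ ⟨fun e => e.out.1, fun e _ => e.out_fst_mem⟩ rfl
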